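/- Under Assumption 1, for any fixed m ∈ ℕ^q, max_{|j|≤m} ‖ √(|Γ̃_n(j)|) (γ̂_n(j) − γ(j)) − |n|^{−1/2} ∑_{i∈Γ_n} (ξ_i ξ_{i+j}ᵀ − γ(j)) ‖_∞ → 0 in probability as n → ∞; in particular the sample autocovariances may equivalently be scaled by √(|Γ̃_n(j)|) or by √(|n|). -/

import Mathlib

/-!
For a fixed lag `j` and a fixed matrix entry, write `Z_i` for the centred lagged product
`ξ_i^{(ν)} ξ_{i+j}^{(μ)} - γ(j)_{νμ}`. The difference of the two scalings is a weighted sum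
`∑_{i ∈ Γ_n} c_i Z_i` with `c_i = |Γ̃_n(j)|^{-1/2} - |n|^{-1/2}` on `Γ̃_n(j)` and
`c_i = -|n|^{-1/2}` elsewhere (`scaling_diff_eq`), and a direct computation gives
`∑ c_i² = 2 (1 - (|Γ̃_n(j)| / |n|)^{1/2})` (`sum_wt_sq`). This tends to `0`, because only a boundary
layer of `Γ_n` of width `|j|` is lost (`tendsto_card_ratio`).

It remains to know that `E (∑ c_i Z_i)² ≤ K ∑ c_i²` with `K` independent of the weights
(`exists_second_moment_bound`), which holds as soon as the covariances of the stationary field `Z`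
are absolutely summable over `ℤ^q`. Fourth moments put `Z_i` in `L²`, so Ibragimov's covariance
inequality `Cov(X, Y)² ≤ 4 φ E(X²) E(Y²)` (`sq_cov_le`) applies and gives
`|Cov(Z_0, Z_k)| ≤ C φ(‖k‖_∞ - 2 ‖j‖_∞)^{1/2}` (`abs_cov_lagProd_le`). A sup-norm sphere of radius
`r` in `ℤ^q` has `O(r^{q-1})` points (`card_sphere_le`), and the assumed summability of
`r^{q-1} φ(r)^{1/2}` concludes. Chebyshev's inequality and a union bound over the finitely many lags
and entries then give the convergence in probability.
-/

open MeasureTheory Filter Finset Topology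

noncomputable section

variable {Ω : Type*}

/-- σ-algebra generated by the field at sites whose `j`-th coordinate is `≤ r`. -/
def sigmaLE {d : ℕ} {E : Type*} [MeasurableSpace Ω] [MeasurableSpace E]
    (ξ : (Fin d → ℤ) → Ω → E) (j : Fin d) (r : ℤ) : MeasurableSpace Ω :=
  ⨆ i ∈ {i : Fin d → ℤ | i j ≤ r}, MeasurableSpace.comap (ξ i) inferInstance

/-- σ-algebra generated by the field at sites whose `j`-th coordinate is `≥ r`. -/
def sigmaGE {d : ℕ} {E : Type*} [MeasurableSpace Ω] [MeasurableSpace E]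
    (ξ : (Fin d → ℤ) → Ω → E) (j : Fin d) (r : ℤ) : MeasurableSpace Ω :=
  ⨆ i ∈ {i : Fin d → ℤ | r ≤ i j}, MeasurableSpace.comap (ξ i) inferInstance

/-- φ-mixing coefficient in direction `j` at distance `r`. -/
def phiCoeff [MeasurableSpace Ω] {d : ℕ} {E : Type*} [MeasurableSpace E]
    (ξ : (Fin d → ℤ) → Ω → E) (P : Measure Ω) (j : Fin d) (r : ℤ) : ℝ :=
  sSup {x | ∃ A B : Set Ω, MeasurableSet[sigmaLE ξ j 0] A ∧ MeasurableSet[sigmaGE ξ j r] B ∧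
    P A ≠ 0 ∧ x = |(P (A ∩ B)).toReal / (P A).toReal - (P B).toReal|}

/-- The (half-space) φ-mixing coefficient `φ(r)`, with the convention `φ(r) = 1` for `r ≤ 0`. -/
def phiMix [MeasurableSpace Ω] {d : ℕ} {E : Type*} [MeasurableSpace E]
    (ξ : (Fin d → ℤ) → Ω → E) (P : Measure Ω) (r : ℤ) : ℝ :=
  if r ≤ 0 then 1 else ⨆ j : Fin d, phiCoeff ξ P j r

/-- Strict stationarity: all finite dimensional distributions are shift invariant. -/
def StrictStationary [MeasurableSpace Ω] {d : ℕ} {E : Type*} [MeasurableSpace E]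
    (ξ : (Fin d → ℤ) → Ω → E) (P : Measure Ω) : Prop :=
  ∀ t : Fin d → ℤ,
    Measure.map (fun ω => (fun i => ξ (i + t) ω)) P = Measure.map (fun ω => (fun i => ξ i ω)) P

/-- The index box `Γ_n = {1,…,n₁} × ⋯ × {1,…,n_d}`. -/
def box (d : ℕ) (n : Fin d → ℕ) : Finset (Fin d → ℤ) :=
  Finset.Icc 1 (fun i => (n i : ℤ))

/-- `Γ̃_n(j) = {i ∈ Γ_n : i + j ∈ Γ_n}`. -/
def boxJ (d : ℕ) (n : Fin d → ℕ) (j : Fin d → ℤ) : Finset (Fin d → ℤ) :=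
  (box d n).filter (fun i => i + j ∈ box d n)

/-- The lag window `{j : |j_i| ≤ m_i ∀ i}`. -/
def lags (d : ℕ) (m : Fin d → ℕ) : Finset (Fin d → ℤ) :=
  Finset.Icc (fun i => -(m i : ℤ)) (fun i => (m i : ℤ))

/-- Autocovariance matrix `γ(j) = E(ξ_0 ξ_jᵀ)`. -/
def acov [MeasurableSpace Ω] {d p : ℕ} (ξ : (Fin d → ℤ) → Ω → (Fin p → ℝ)) (P : Measure Ω)
    (j : Fin d → ℤ) : Fin p → Fin p → ℝ :=
  fun ν μ => ∫ ω, ξ 0 ω ν * ξ j ω μ ∂P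

/-- Sample autocovariance `γ̂_n(j)`. -/
def acovHat {d p : ℕ} (ξ : (Fin d → ℤ) → Ω → (Fin p → ℝ)) (n : Fin d → ℕ) (j : Fin d → ℤ)
    (ω : Ω) : Fin p → Fin p → ℝ :=
  fun ν μ => ((boxJ d n j).card : ℝ)⁻¹ * ∑ i ∈ boxJ d n j, ξ i ω ν * ξ (i + j) ω μ

/-- The estimator `σ̂²_n = ∑_{|j| ≤ m} w_m(j) γ̂_n(j)`. -/
def sigmaHat {d p : ℕ} (ξ : (Fin d → ℤ) → Ω → (Fin p → ℝ))
    (w : (Fin d → ℕ) → (Fin d → ℤ) → ℝ) (m n : Fin d → ℕ) (ω : Ω) : Fin p → Fin p → ℝ :=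
  ∑ j ∈ lags d m, w m j • acovHat ξ n j ω


/-- The lag window is nonempty (it contains `0`). -/
lemma lags_nonempty (d : ℕ) (m : Fin d → ℕ) : (lags d m).Nonempty :=
  ⟨0, Finset.mem_Icc.mpr ⟨fun i => neg_nonpos.mpr (Int.natCast_nonneg (m i)),
    fun i => Int.natCast_nonneg (m i)⟩⟩


/-! ### The covariance inequality for φ-mixing σ-algebras -/

/-- Splitting a set of values of `Y` according to the sign of the defect
`P(A ∩ {Y = b}) - P(A) P(Y = b)` bounds the total defect by twice the mixing coefficient. -/
lemma sum_abs_defect_le {mΩ : MeasurableSpace Ω} (P : Measure Ω) [IsProbabilityMeasure P]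
    {Y : Ω → ℝ} {φ : ℝ} {A : Set Ω} (t : Finset ℝ)
    (hY : ∀ b, MeasurableSet (Y ⁻¹' {b}))
    (hφ : ∀ u : Finset ℝ, |P.real (A ∩ Y ⁻¹' u) - P.real A * P.real (Y ⁻¹' u)| ≤ φ * P.real A) :
    ∑ b ∈ t, |P.real (A ∩ Y ⁻¹' {b}) - P.real A * P.real (Y ⁻¹' {b})| ≤ 2 * φ * P.real A := by
  classical
  have key : ∀ u : Finset ℝ, ∑ b ∈ u, (P.real (A ∩ Y ⁻¹' {b}) - P.real A * P.real (Y ⁻¹' {b}))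
      = P.real (A ∩ Y ⁻¹' u) - P.real A * P.real (Y ⁻¹' u) := by
    intro u
    have hB : ∀ Q : Measure Ω, IsFiniteMeasure Q →
        ∑ b ∈ u, Q.real (Y ⁻¹' {b}) = Q.real (Y ⁻¹' u) := by
      intro Q _
      exact sum_measureReal_preimage_singleton u fun b _ => hY b
    rw [sum_sub_distrib, ← mul_sum, hB P inferInstance]
    have h := hB (P.restrict A) inferInstance
    have hu : MeasurableSet (Y ⁻¹' (u : Set ℝ)) := by
      have : Y ⁻¹' (u : Set ℝ) = ⋃ b ∈ u, Y ⁻¹' {b} := by ext; simp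
      rw [this]; exact Finset.measurableSet_biUnion _ fun b _ => hY b
    simp only [measureReal_restrict_apply (hY _), measureReal_restrict_apply hu] at h
    simp only [Set.inter_comm A]
    rw [h]
  set D : ℝ → ℝ := fun b => P.real (A ∩ Y ⁻¹' {b}) - P.real A * P.real (Y ⁻¹' {b}) with hD
  have h1 : ∑ b ∈ t with 0 ≤ D b, |D b| ≤ φ * P.real A := by
    calc _ = ∑ b ∈ t with 0 ≤ D b, D b :=
          sum_congr rfl fun b hb => abs_of_nonneg (mem_filter.1 hb).2
      _ ≤ _ := by rw [key]; exact (le_abs_self _).trans (hφ _)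
  have h2 : ∑ b ∈ t with ¬ 0 ≤ D b, |D b| ≤ φ * P.real A := by
    calc _ = -∑ b ∈ t with ¬ 0 ≤ D b, D b := by
          rw [← sum_neg_distrib]
          exact sum_congr rfl fun b hb => abs_of_neg (not_le.1 (mem_filter.1 hb).2)
      _ ≤ _ := by rw [key]; exact (neg_le_abs _).trans (hφ _)
  have := sum_filter_add_sum_filter_not t (fun b => 0 ≤ D b) (fun b => |D b|)
  linarith

/-- Expectation of a function of two finitely-valued random variables. -/
lemma integral_finite_valued {mΩ : MeasurableSpace Ω} (P : Measure Ω) [IsProbabilityMeasure P]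
    {X Y : Ω → ℝ} (s t : Finset ℝ) (hXs : ∀ ω, X ω ∈ s) (hYt : ∀ ω, Y ω ∈ t)
    (hX : ∀ a, MeasurableSet (X ⁻¹' {a})) (hY : ∀ b, MeasurableSet (Y ⁻¹' {b}))
    (g : ℝ → ℝ → ℝ) :
    ∫ ω, g (X ω) (Y ω) ∂P = ∑ a ∈ s, ∑ b ∈ t, P.real (X ⁻¹' {a} ∩ Y ⁻¹' {b}) * g a b := by
  classical
  have h : ∀ ω, g (X ω) (Y ω) =
      ∑ a ∈ s, ∑ b ∈ t, (X ⁻¹' {a} ∩ Y ⁻¹' {b}).indicator (fun _ => g a b) ω := by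
    intro ω
    rw [sum_eq_single (X ω), sum_eq_single (Y ω)]
    · simp
    · intro b _ hb
      exact Set.indicator_of_notMem (fun h => hb h.2.symm) _
    · exact fun h => (h (hYt ω)).elim
    · intro a _ ha
      exact sum_eq_zero fun b _ => Set.indicator_of_notMem (fun h => ha h.1.symm) _
    · exact fun h => (h (hXs ω)).elim
  have hi : ∀ a b, Integrable ((X ⁻¹' {a} ∩ Y ⁻¹' {b}).indicator (fun _ => g a b)) P :=
    fun a b => (integrable_const _).indicator ((hX a).inter (hY b))
  simp_rw [h]
  rw [integral_finsetSum _ fun a _ => integrable_finsetSum _ fun b _ => hi a b]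
  refine sum_congr rfl fun a _ => ?_
  rw [integral_finsetSum _ fun b _ => hi a b]
  refine sum_congr rfl fun b _ => ?_
  rw [integral_indicator_const _ ((hX a).inter (hY b)), smul_eq_mul]

/-- The covariance inequality for finitely-valued random variables: Cauchy–Schwarz with respect to
the finite measure `|P(X = a, Y = b) - P(X = a) P(Y = b)|`, whose first marginal is at most
`2 φ P(X = a)` by mixing and whose second marginal is trivially at most `2 P(Y = b)`. -/
lemma sq_cov_le_finite {mΩ : MeasurableSpace Ω} (P : Measure Ω) [IsProbabilityMeasure P]
    {X Y : Ω → ℝ} {φ : ℝ} (s t : Finset ℝ) (hXs : ∀ ω, X ω ∈ s) (hYt : ∀ ω, Y ω ∈ t)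
    (hX : ∀ a, MeasurableSet (X ⁻¹' {a})) (hY : ∀ b, MeasurableSet (Y ⁻¹' {b}))
    (hφ0 : 0 ≤ φ)
    (hφ : ∀ a : ℝ, ∀ u : Finset ℝ, |P.real (X ⁻¹' {a} ∩ Y ⁻¹' u) -
      P.real (X ⁻¹' {a}) * P.real (Y ⁻¹' u)| ≤ φ * P.real (X ⁻¹' {a})) :
    (∫ ω, X ω * Y ω ∂P - (∫ ω, X ω ∂P) * ∫ ω, Y ω ∂P) ^ 2 ≤
      4 * φ * (∫ ω, X ω ^ 2 ∂P) * ∫ ω, Y ω ^ 2 ∂P := by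
  classical
  set p : ℝ → ℝ → ℝ := fun a b => P.real (X ⁻¹' {a} ∩ Y ⁻¹' {b}) with hp
  set pX : ℝ → ℝ := fun a => P.real (X ⁻¹' {a}) with hpX
  set pY : ℝ → ℝ := fun b => P.real (Y ⁻¹' {b}) with hpY
  have marg : ∀ (Z : Ω → ℝ) (v : Finset ℝ), (∀ ω, Z ω ∈ v) →
      (∀ a, MeasurableSet (Z ⁻¹' {a})) → ∀ S : Set Ω,
      ∑ b ∈ v, P.real (S ∩ Z ⁻¹' {b}) = P.real S := by
    intro Z v hv hZ S
    have h := sum_measureReal_preimage_singleton (μ := P.restrict S) v (fun b _ => hZ b)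
    simp only [measureReal_restrict_apply (hZ _)] at h
    have h' : Z ⁻¹' (v : Set ℝ) = Set.univ := by ext ω; simp [hv ω]
    rw [h', measureReal_restrict_apply MeasurableSet.univ, Set.univ_inter] at h
    simpa only [Set.inter_comm S] using h
  have margX : ∀ a, ∑ b ∈ t, p a b = pX a := fun a => marg Y t hYt hY _
  have margY : ∀ b, ∑ a ∈ s, p a b = pY b := fun b => by
    have := marg X s hXs hX (Y ⁻¹' {b})
    simpa only [hp, hpY, Set.inter_comm] using this
  have totX : ∑ a ∈ s, pX a = 1 := by
    have := marg X s hXs hX Set.univ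
    simpa [hpX] using this
  have eX : ∀ f : ℝ → ℝ, ∫ ω, f (X ω) ∂P = ∑ a ∈ s, pX a * f a := fun f => by
    rw [integral_finite_valued P s t hXs hYt hX hY (fun a _ => f a)]
    exact sum_congr rfl fun a _ => by rw [← sum_mul, ← margX a]
  have eY : ∀ f : ℝ → ℝ, ∫ ω, f (Y ω) ∂P = ∑ b ∈ t, pY b * f b := fun f => by
    rw [integral_finite_valued P s t hXs hYt hX hY (fun _ b => f b), sum_comm]
    exact sum_congr rfl fun b _ => by rw [← sum_mul, ← margY b]
  set D : ℝ → ℝ → ℝ := fun a b => p a b - pX a * pY b with hD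
  have hcov : ∫ ω, X ω * Y ω ∂P - (∫ ω, X ω ∂P) * ∫ ω, Y ω ∂P =
      ∑ x ∈ s ×ˢ t, x.1 * x.2 * D x.1 x.2 := by
    rw [integral_finite_valued P s t hXs hYt hX hY (fun a b => a * b), eX (fun a => a),
      eY (fun b => b), sum_mul_sum, ← sum_sub_distrib, sum_product]
    refine sum_congr rfl fun a _ => ?_
    rw [← sum_sub_distrib]
    exact sum_congr rfl fun b _ => by simp only [hD, hp]; ring
  have hcs : (∑ x ∈ s ×ˢ t, x.1 * x.2 * D x.1 x.2) ^ 2 ≤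
      (∑ x ∈ s ×ˢ t, x.1 ^ 2 * |D x.1 x.2|) * ∑ x ∈ s ×ˢ t, x.2 ^ 2 * |D x.1 x.2| :=
    sum_sq_le_sum_mul_sum_of_sq_le_mul _ (fun _ _ => by positivity) (fun _ _ => by positivity)
      fun x _ => le_of_eq (by rw [mul_pow, mul_pow, ← sq_abs (D x.1 x.2)]; ring)
  have hf : ∑ x ∈ s ×ˢ t, x.1 ^ 2 * |D x.1 x.2| ≤ 2 * φ * ∫ ω, X ω ^ 2 ∂P := by
    rw [eX (fun a => a ^ 2), sum_product, mul_sum]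
    refine sum_le_sum fun a _ => ?_
    simp only
    rw [← mul_sum]
    have := sum_abs_defect_le P t hY (hφ a)
    nlinarith [mul_le_mul_of_nonneg_left this (sq_nonneg a)]
  have hg : ∑ x ∈ s ×ˢ t, x.2 ^ 2 * |D x.1 x.2| ≤ 2 * ∫ ω, Y ω ^ 2 ∂P := by
    rw [eY (fun b => b ^ 2), sum_product_right, mul_sum]
    refine sum_le_sum fun b _ => ?_
    simp only
    rw [← mul_sum]
    have : ∑ a ∈ s, |D a b| ≤ 2 * pY b := by
      calc ∑ a ∈ s, |D a b| ≤ ∑ a ∈ s, (p a b + pX a * pY b) := by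
            refine sum_le_sum fun a _ => (abs_sub _ _).trans_eq ?_
            rw [abs_of_nonneg measureReal_nonneg,
              abs_of_nonneg (mul_nonneg measureReal_nonneg measureReal_nonneg)]
        _ = 2 * pY b := by rw [sum_add_distrib, margY, ← sum_mul, totX]; ring
    nlinarith [mul_le_mul_of_nonneg_left this (sq_nonneg b)]
  rw [hcov]
  calc _ ≤ _ := hcs
    _ ≤ (2 * φ * ∫ ω, X ω ^ 2 ∂P) * (2 * ∫ ω, Y ω ^ 2 ∂P) := by
        refine mul_le_mul hf hg (sum_nonneg fun _ _ => by positivity) ?_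
        exact mul_nonneg (by positivity) (integral_nonneg fun _ => by positivity)
    _ = _ := by ring

/-- Ibragimov's covariance inequality in `L²`: if `|P(A ∩ B) - P(A) P(B)| ≤ φ P(A)` for all
`A ∈ 𝒜` and `B ∈ ℬ`, then `Cov(X, Y)² ≤ 4 φ E(X²) E(Y²)` for square-integrable `X`, `Y` measurable
with respect to `𝒜` and `ℬ`. It follows from the finitely-valued case by dominated convergence. -/
lemma sq_cov_le {mA mB mΩ : MeasurableSpace Ω} (P : Measure Ω) [IsProbabilityMeasure P]
    (hA : mA ≤ mΩ) (hB : mB ≤ mΩ)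
    {X Y : Ω → ℝ} {φ : ℝ} (hφ0 : 0 ≤ φ)
    (hφ : ∀ A B : Set Ω, MeasurableSet[mA] A → MeasurableSet[mB] B →
      |P.real (A ∩ B) - P.real A * P.real B| ≤ φ * P.real A)
    (hXm : Measurable[mA] X) (hYm : Measurable[mB] Y)
    (hX : MemLp X 2 P) (hY : MemLp Y 2 P) :
    (∫ ω, X ω * Y ω ∂P - (∫ ω, X ω ∂P) * ∫ ω, Y ω ∂P) ^ 2 ≤
      4 * φ * (∫ ω, X ω ^ 2 ∂P) * ∫ ω, Y ω ^ 2 ∂P := by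
  let x : ℕ → @SimpleFunc Ω mA ℝ := fun k =>
    @SimpleFunc.approxOn ℝ Ω _ _ _ mA X hXm Set.univ 0 (Set.mem_univ _) _ k
  let y : ℕ → @SimpleFunc Ω mB ℝ := fun k =>
    @SimpleFunc.approxOn ℝ Ω _ _ _ mB Y hYm Set.univ 0 (Set.mem_univ _) _ k
  have hx : ∀ ω, Tendsto (fun k => x k ω) atTop (𝓝 (X ω)) := fun ω =>
    @SimpleFunc.tendsto_approxOn ℝ Ω _ _ _ mA X hXm Set.univ 0 (Set.mem_univ _) _ ω (by simp)
  have hy : ∀ ω, Tendsto (fun k => y k ω) atTop (𝓝 (Y ω)) := fun ω =>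
    @SimpleFunc.tendsto_approxOn ℝ Ω _ _ _ mB Y hYm Set.univ 0 (Set.mem_univ _) _ ω (by simp)
  have bx : ∀ k ω, |x k ω| ≤ 2 * |X ω| := fun k ω => by
    have := @SimpleFunc.norm_approxOn_zero_le Ω ℝ mA _ _ _ X hXm Set.univ (Set.mem_univ _) _ ω k
    rw [two_mul]; exact this
  have byy : ∀ k ω, |y k ω| ≤ 2 * |Y ω| := fun k ω => by
    have := @SimpleFunc.norm_approxOn_zero_le Ω ℝ mB _ _ _ Y hYm Set.univ (Set.mem_univ _) _ ω k
    rw [two_mul]; exact this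
  have mx : ∀ k, Measurable (x k) := fun k => (@SimpleFunc.measurable Ω ℝ mA _ (x k)).mono hA le_rfl
  have my : ∀ k, Measurable (y k) := fun k => (@SimpleFunc.measurable Ω ℝ mB _ (y k)).mono hB le_rfl
  have iX : Integrable X P := hX.integrable (by norm_num)
  have iY : Integrable Y P := hY.integrable (by norm_num)
  have l1 : Tendsto (fun k => ∫ ω, x k ω * y k ω ∂P) atTop (𝓝 (∫ ω, X ω * Y ω ∂P)) := by
    refine tendsto_integral_of_dominated_convergence (fun ω => 4 * |X ω * Y ω|)
      (fun k => ((mx k).mul (my k)).aestronglyMeasurable) ((hX.integrable_mul hY).abs.const_mul 4)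
      (fun k => ae_of_all _ fun ω => ?_) (ae_of_all _ fun ω => (hx ω).mul (hy ω))
    rw [Real.norm_eq_abs, abs_mul, abs_mul]
    nlinarith [mul_le_mul (bx k ω) (byy k ω) (abs_nonneg _) (by positivity)]
  have l2 : Tendsto (fun k => ∫ ω, x k ω ∂P) atTop (𝓝 (∫ ω, X ω ∂P)) :=
    tendsto_integral_of_dominated_convergence (fun ω => 2 * |X ω|)
      (fun k => (mx k).aestronglyMeasurable) (iX.abs.const_mul 2)
      (fun k => ae_of_all _ fun ω => bx k ω) (ae_of_all _ fun ω => hx ω)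
  have l3 : Tendsto (fun k => ∫ ω, y k ω ∂P) atTop (𝓝 (∫ ω, Y ω ∂P)) :=
    tendsto_integral_of_dominated_convergence (fun ω => 2 * |Y ω|)
      (fun k => (my k).aestronglyMeasurable) (iY.abs.const_mul 2)
      (fun k => ae_of_all _ fun ω => byy k ω) (ae_of_all _ fun ω => hy ω)
  have l4 : Tendsto (fun k => ∫ ω, x k ω ^ 2 ∂P) atTop (𝓝 (∫ ω, X ω ^ 2 ∂P)) := by
    refine tendsto_integral_of_dominated_convergence (fun ω => 4 * X ω ^ 2)
      (fun k => ((mx k).pow_const 2).aestronglyMeasurable) (hX.integrable_sq.const_mul 4)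
      (fun k => ae_of_all _ fun ω => ?_) (ae_of_all _ fun ω => (hx ω).pow 2)
    rw [Real.norm_eq_abs, abs_pow, ← sq_abs (X ω)]
    nlinarith [mul_le_mul (bx k ω) (bx k ω) (abs_nonneg _) (by positivity)]
  have l5 : Tendsto (fun k => ∫ ω, y k ω ^ 2 ∂P) atTop (𝓝 (∫ ω, Y ω ^ 2 ∂P)) := by
    refine tendsto_integral_of_dominated_convergence (fun ω => 4 * Y ω ^ 2)
      (fun k => ((my k).pow_const 2).aestronglyMeasurable) (hY.integrable_sq.const_mul 4)
      (fun k => ae_of_all _ fun ω => ?_) (ae_of_all _ fun ω => (hy ω).pow 2)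
    rw [Real.norm_eq_abs, abs_pow, ← sq_abs (Y ω)]
    nlinarith [mul_le_mul (byy k ω) (byy k ω) (abs_nonneg _) (by positivity)]
  refine le_of_tendsto_of_tendsto' ((l1.sub (l2.mul l3)).pow 2) ((l4.const_mul _).mul l5)
    fun k => ?_
  refine sq_cov_le_finite P (@SimpleFunc.range Ω ℝ mA (x k)) (@SimpleFunc.range Ω ℝ mB (y k))
    (fun ω => @SimpleFunc.mem_range_self Ω ℝ mA (x k) ω)
    (fun ω => @SimpleFunc.mem_range_self Ω ℝ mB (y k) ω)
    (fun a => mx k (measurableSet_singleton a)) (fun b => my k (measurableSet_singleton b)) hφ0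
    fun a u => hφ _ _ ?_ ?_
  · exact @SimpleFunc.measurableSet_preimage Ω ℝ mA (x k) _
  · exact @SimpleFunc.measurableSet_preimage Ω ℝ mB (y k) _


/-! ### Mixing coefficients and stationarity of the field -/

lemma sigmaLE_le [MeasurableSpace Ω] {d : ℕ} {E : Type*} [MeasurableSpace E]
    {ξ : (Fin d → ℤ) → Ω → E} (hmeas : ∀ i, Measurable (ξ i)) (l : Fin d) (r : ℤ) :
    sigmaLE ξ l r ≤ ‹MeasurableSpace Ω› :=
  iSup₂_le fun i _ => (hmeas i).comap_le

lemma sigmaGE_le [MeasurableSpace Ω] {d : ℕ} {E : Type*} [MeasurableSpace E]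
    {ξ : (Fin d → ℤ) → Ω → E} (hmeas : ∀ i, Measurable (ξ i)) (l : Fin d) (r : ℤ) :
    sigmaGE ξ l r ≤ ‹MeasurableSpace Ω› :=
  iSup₂_le fun i _ => (hmeas i).comap_le

lemma measurable_sigmaLE [MeasurableSpace Ω] {d : ℕ} {E : Type*} [MeasurableSpace E]
    {ξ : (Fin d → ℤ) → Ω → E} {l : Fin d} {r : ℤ} {i : Fin d → ℤ} (h : i l ≤ r) :
    Measurable[sigmaLE ξ l r] (ξ i) :=
  measurable_iff_comap_le.2 (le_iSup₂_of_le i h le_rfl)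

lemma measurable_sigmaGE [MeasurableSpace Ω] {d : ℕ} {E : Type*} [MeasurableSpace E]
    {ξ : (Fin d → ℤ) → Ω → E} {l : Fin d} {r : ℤ} {i : Fin d → ℤ} (h : r ≤ i l) :
    Measurable[sigmaGE ξ l r] (ξ i) :=
  measurable_iff_comap_le.2 (le_iSup₂_of_le i h le_rfl)

lemma phiMix_nonneg [MeasurableSpace Ω] {d : ℕ} {E : Type*} [MeasurableSpace E]
    (ξ : (Fin d → ℤ) → Ω → E) (P : Measure Ω) (r : ℤ) : 0 ≤ phiMix ξ P r := by
  unfold phiMix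
  split_ifs
  · exact zero_le_one
  · refine Real.iSup_nonneg fun j => Real.sSup_nonneg ?_
    rintro x ⟨A, B, _, _, _, rfl⟩
    exact abs_nonneg _

/-- The defining property of the mixing coefficients, in a multiplied-out form that also covers
null events `A` and separations `r ≤ 0`. -/
lemma defect_le_phiMix [MeasurableSpace Ω] {d : ℕ} {E : Type*} [MeasurableSpace E]
    (ξ : (Fin d → ℤ) → Ω → E) (P : Measure Ω) [IsProbabilityMeasure P] (l : Fin d) (r : ℤ)
    {A B : Set Ω} (hA : MeasurableSet[sigmaLE ξ l 0] A) (hB : MeasurableSet[sigmaGE ξ l r] B) :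
    |P.real (A ∩ B) - P.real A * P.real B| ≤ phiMix ξ P r * P.real A := by
  have h1 : P.real (A ∩ B) ≤ P.real A := measureReal_mono Set.inter_subset_left
  have h2 : P.real B ≤ 1 := measureReal_le_one
  have h3 : 0 ≤ P.real (A ∩ B) := measureReal_nonneg
  have h4 : 0 ≤ P.real A := measureReal_nonneg
  have h5 : 0 ≤ P.real B := measureReal_nonneg
  unfold phiMix
  split_ifs with hr
  · rw [one_mul, abs_le]
    constructor <;> nlinarith
  by_cases hA0 : P A = 0
  · have : P.real A = 0 := by simp [measureReal_def, hA0]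
    have : P.real (A ∩ B) = 0 := by linarith
    simp [*]
  have hpos : 0 < P.real A := ENNReal.toReal_pos hA0 (measure_ne_top _ _)
  have hle : |P.real (A ∩ B) / P.real A - P.real B| ≤ phiCoeff ξ P l r := by
    refine le_csSup ⟨1, ?_⟩ ⟨A, B, hA, hB, hA0, rfl⟩
    rintro x ⟨A', B', _, _, _, rfl⟩
    have e1 : (P (A' ∩ B')).toReal / (P A').toReal ≤ 1 :=
      div_le_one_of_le₀ (measureReal_mono (μ := P) Set.inter_subset_left) ENNReal.toReal_nonneg
    have e2 : 0 ≤ (P (A' ∩ B')).toReal / (P A').toReal := by positivity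
    have e3 : (P B').toReal ≤ 1 := measureReal_le_one (μ := P)
    have e4 : 0 ≤ (P B').toReal := ENNReal.toReal_nonneg
    rw [abs_le]; constructor <;> linarith
  have hsup : phiCoeff ξ P l r ≤ ⨆ j : Fin d, phiCoeff ξ P j r :=
    le_ciSup (f := fun j => phiCoeff ξ P j r) (Set.finite_range _).bddAbove l
  calc |P.real (A ∩ B) - P.real A * P.real B|
      = |P.real (A ∩ B) / P.real A - P.real B| * P.real A := by
        rw [← abs_of_pos hpos, ← abs_mul, abs_of_pos hpos]; congr 1; field_simp
    _ ≤ _ := mul_le_mul_of_nonneg_right (hle.trans hsup) h4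

lemma StrictStationary.integral_shift [MeasurableSpace Ω] {d : ℕ} {E : Type*} [MeasurableSpace E]
    {ξ : (Fin d → ℤ) → Ω → E} {P : Measure Ω} (hmeas : ∀ i, Measurable (ξ i))
    (hstat : StrictStationary ξ P) {F : ((Fin d → ℤ) → E) → ℝ} (hF : Measurable F)
    (t : Fin d → ℤ) :
    ∫ ω, F (fun i => ξ (i + t) ω) ∂P = ∫ ω, F (fun i => ξ i ω) ∂P := by
  rw [← integral_map (φ := fun ω i => ξ (i + t) ω)
      (measurable_pi_lambda _ fun i => hmeas _).aemeasurable hF.aestronglyMeasurable,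
    ← integral_map (φ := fun ω i => ξ i ω)
      (measurable_pi_lambda _ fun i => hmeas _).aemeasurable hF.aestronglyMeasurable, hstat t]

lemma StrictStationary.integrable_shift [MeasurableSpace Ω] {d : ℕ} {E : Type*}
    [MeasurableSpace E] {ξ : (Fin d → ℤ) → Ω → E} {P : Measure Ω}
    (hmeas : ∀ i, Measurable (ξ i))
    (hstat : StrictStationary ξ P) {F : ((Fin d → ℤ) → E) → ℝ} (hF : Measurable F)
    (t : Fin d → ℤ) (h : Integrable (fun ω => F (fun i => ξ i ω)) P) :
    Integrable (fun ω => F (fun i => ξ (i + t) ω)) P := by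
  have h1 := (integrable_map_measure (f := fun ω i => ξ i ω) hF.aestronglyMeasurable
      (measurable_pi_lambda _ fun i => hmeas _).aemeasurable (μ := P)).2 h
  rw [← hstat t] at h1
  exact (integrable_map_measure (f := fun ω i => ξ (i + t) ω) hF.aestronglyMeasurable
      (measurable_pi_lambda _ fun i => hmeas _).aemeasurable).1 h1

/-! ### Counting lattice points on spheres of the sup norm -/

/-- The sup norm on `ℤ^d`, with natural-number values. -/
def supAbs {d : ℕ} (k : Fin d → ℤ) : ℕ := univ.sup fun l => (k l).natAbs

lemma natAbs_le_supAbs {d : ℕ} (k : Fin d → ℤ) (l : Fin d) : (k l).natAbs ≤ supAbs k :=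
  Finset.le_sup (f := fun l => (k l).natAbs) (mem_univ l)

lemma exists_natAbs_eq_supAbs {d : ℕ} [Nonempty (Fin d)] (k : Fin d → ℤ) :
    ∃ l, (k l).natAbs = supAbs k := by
  obtain ⟨l, -, hl⟩ := exists_mem_eq_sup univ univ_nonempty fun l => (k l).natAbs
  exact ⟨l, hl.symm⟩

/-- A sphere of radius `r` in `ℤ^d` is covered by its `2 d` faces, each with `(2 r + 1) ^ (d - 1)`
points. -/
lemma card_sphere_le {d : ℕ} [Nonempty (Fin d)] (T : Finset (Fin d → ℤ)) (r : ℕ)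
    (hT : ∀ k ∈ T, supAbs k = r) :
    (T.card : ℝ) ≤ 2 * d * (2 * r + 1) ^ (d - 1) := by
  classical
  let face : Fin d → Finset (Fin d → ℤ) := fun l =>
    Fintype.piFinset fun i => if i = l then {(r : ℤ), -(r : ℤ)} else Finset.Icc (-(r : ℤ)) r
  have hsub : T ⊆ univ.biUnion face := by
    intro k hk
    obtain ⟨l, hl⟩ := exists_natAbs_eq_supAbs k
    rw [mem_biUnion]
    refine ⟨l, mem_univ _, Fintype.mem_piFinset.2 fun i => ?_⟩
    have hi := natAbs_le_supAbs k i
    rw [hT k hk] at hl hi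
    split_ifs with h
    · subst h
      simp only [Finset.mem_insert, Finset.mem_singleton]; omega
    · rw [Finset.mem_Icc]; omega
  have hface : ∀ l, (face l).card ≤ 2 * (2 * r + 1) ^ (d - 1) := by
    intro l
    rw [Fintype.card_piFinset, ← mul_prod_erase _ _ (mem_univ l)]
    refine Nat.mul_le_mul ?_ (le_of_eq ?_)
    · simpa using card_le_two
    · rw [prod_congr rfl (g := fun _ => 2 * r + 1), prod_const, card_erase_of_mem (mem_univ l),
        card_univ, Fintype.card_fin]
      intro i hi
      rw [if_neg (ne_of_mem_erase hi), Int.card_Icc]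
      omega
  have h := (card_le_card hsub).trans (card_biUnion_le.trans (sum_le_card_nsmul _ _ _
    fun l _ => hface l))
  rw [card_univ, Fintype.card_fin, smul_eq_mul] at h
  calc (T.card : ℝ) ≤ ((d * (2 * (2 * r + 1) ^ (d - 1)) : ℕ) : ℝ) := by exact_mod_cast h
    _ = _ := by push_cast; ring

lemma sum_supAbs_le {d : ℕ} [Nonempty (Fin d)] {g : ℕ → ℝ} (hg : ∀ r, 0 ≤ g r)
    (hs : Summable fun r : ℕ => 2 * (d : ℝ) * (2 * r + 1) ^ (d - 1) * g r)
    (T : Finset (Fin d → ℤ)) :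
    ∑ k ∈ T, g (supAbs k) ≤ ∑' r : ℕ, 2 * (d : ℝ) * (2 * r + 1) ^ (d - 1) * g r := by
  classical
  rw [← sum_fiberwise_of_maps_to (t := T.image supAbs) (g := supAbs)
    fun k hk => mem_image_of_mem _ hk]
  refine le_trans (sum_le_sum fun r _ => ?_)
    (hs.sum_le_tsum (T.image supAbs) fun r _ => mul_nonneg (by positivity) (hg r))
  rw [sum_congr rfl (g := fun _ => g r) fun k hk => by rw [(mem_filter.1 hk).2], sum_const,
    nsmul_eq_mul]
  exact mul_le_mul_of_nonneg_right (card_sphere_le _ r fun k hk => (mem_filter.1 hk).2) (hg r)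

/-- Summability against `r ^ e` is not affected by a delay of `a` and by replacing `r` with
`2 r + 1`. -/
lemma summable_delay {f : ℤ → ℝ} (e a : ℕ) (hf : ∀ r, 0 ≤ f r)
    (hs : Summable fun r : ℕ => (r : ℝ) ^ e * f r) :
    Summable fun r : ℕ => (2 * (r : ℝ) + 1) ^ e * f ((r : ℤ) - a) := by
  rw [← summable_nat_add_iff (a + 1)]
  have h1 := ((summable_nat_add_iff 1).2 hs).mul_left ((2 * a + 3 : ℝ) ^ e)
  refine Summable.of_nonneg_of_le (fun r => mul_nonneg (by positivity) (hf _)) (fun r => ?_) h1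
  have e1 : ((r + (a + 1) : ℕ) : ℤ) - a = ((r + 1 : ℕ) : ℤ) := by push_cast; ring
  rw [e1, ← mul_assoc, ← mul_pow]
  refine mul_le_mul_of_nonneg_right (pow_le_pow_left₀ (by positivity) ?_ _) (hf _)
  push_cast
  nlinarith [(Nat.cast_nonneg r : (0 : ℝ) ≤ r), (Nat.cast_nonneg a : (0 : ℝ) ≤ a),
    mul_nonneg (Nat.cast_nonneg r : (0 : ℝ) ≤ r) (Nat.cast_nonneg a : (0 : ℝ) ≤ a)]

/-! ### Second moments of weighted sums of lagged products -/

/-- The centred lagged product `ξ_i^{(ν)} ξ_{i+j}^{(μ)} - γ(j)_{νμ}`. -/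
def lagProd [MeasurableSpace Ω] {q p : ℕ} (ξ : (Fin q → ℤ) → Ω → (Fin p → ℝ)) (P : Measure Ω)
    (j : Fin q → ℤ) (ν μ : Fin p) (i : Fin q → ℤ) (ω : Ω) : ℝ :=
  ξ i ω ν * ξ (i + j) ω μ - acov ξ P j ν μ

lemma measurable_lagProd {m mΩ : MeasurableSpace Ω} {q p : ℕ}
    {ξ : (Fin q → ℤ) → Ω → (Fin p → ℝ)} (P : Measure[mΩ] Ω) (j : Fin q → ℤ) (ν μ : Fin p)
    {i : Fin q → ℤ} (h1 : Measurable[m] (ξ i)) (h2 : Measurable[m] (ξ (i + j))) :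
    Measurable[m] (lagProd ξ P j ν μ i) :=
  (((@measurable_pi_apply _ _ _ ν).comp h1).mul
    ((@measurable_pi_apply _ _ _ μ).comp h2)).sub_const _

lemma integrable_pow_four [MeasurableSpace Ω] {q p : ℕ} {P : Measure Ω}
    {ξ : (Fin q → ℤ) → Ω → (Fin p → ℝ)}
    (hmeas : ∀ i, Measurable (ξ i)) (hstat : StrictStationary ξ P)
    (hmom : ∀ k, Integrable (fun ω => (ξ 0 ω k) ^ 4) P) (i : Fin q → ℤ) (k : Fin p) :
    Integrable (fun ω => (ξ i ω k) ^ 4) P := by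
  have hF : Measurable fun x : (Fin q → ℤ) → (Fin p → ℝ) => x 0 k ^ 4 := by fun_prop
  simpa using hstat.integrable_shift hmeas hF i (hmom k)

lemma memLp_lagProd [MeasurableSpace Ω] {q p : ℕ} {P : Measure Ω} [IsProbabilityMeasure P]
    {ξ : (Fin q → ℤ) → Ω → (Fin p → ℝ)}
    (hmeas : ∀ i, Measurable (ξ i)) (hstat : StrictStationary ξ P)
    (hmom : ∀ k, Integrable (fun ω => (ξ 0 ω k) ^ 4) P) (j : Fin q → ℤ) (ν μ : Fin p)
    (i : Fin q → ℤ) : MemLp (lagProd ξ P j ν μ i) 2 P := by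
  have hm : ∀ i k, Measurable fun ω => ξ i ω k := fun i k => (measurable_pi_apply k).comp (hmeas i)
  refine MemLp.sub (f := fun ω => ξ i ω ν * ξ (i + j) ω μ) ?_ (memLp_const _)
  refine (memLp_two_iff_integrable_sq (f := fun ω => ξ i ω ν * ξ (i + j) ω μ)
    ((hm _ _).mul (hm _ _)).aestronglyMeasurable).2 ?_
  refine ((integrable_pow_four hmeas hstat hmom i ν).add
    (integrable_pow_four hmeas hstat hmom (i + j) μ)).mono'
    (((hm _ _).mul (hm _ _)).pow_const 2).aestronglyMeasurable (ae_of_all _ fun ω => ?_)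
  rw [Real.norm_eq_abs, abs_of_nonneg (sq_nonneg _), Pi.add_apply]
  nlinarith [sq_nonneg ((ξ i ω ν) ^ 2 - (ξ (i + j) ω μ) ^ 2), sq_nonneg ((ξ i ω ν) ^ 2),
    sq_nonneg ((ξ (i + j) ω μ) ^ 2)]

lemma integral_lagProd_mul_shift [MeasurableSpace Ω] {q p : ℕ} {P : Measure Ω}
    {ξ : (Fin q → ℤ) → Ω → (Fin p → ℝ)}
    (hmeas : ∀ i, Measurable (ξ i)) (hstat : StrictStationary ξ P)
    (j : Fin q → ℤ) (ν μ : Fin p) (a b t : Fin q → ℤ) :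
    ∫ ω, lagProd ξ P j ν μ (a + t) ω * lagProd ξ P j ν μ (b + t) ω ∂P =
      ∫ ω, lagProd ξ P j ν μ a ω * lagProd ξ P j ν μ b ω ∂P := by
  have hF : Measurable fun x : (Fin q → ℤ) → (Fin p → ℝ) =>
    (x a ν * x (a + j) μ - acov ξ P j ν μ) * (x b ν * x (b + j) μ - acov ξ P j ν μ) := by fun_prop
  have := hstat.integral_shift hmeas hF t
  simpa only [lagProd, add_right_comm _ j t] using this

lemma integral_lagProd [MeasurableSpace Ω] {q p : ℕ} {P : Measure Ω} [IsProbabilityMeasure P]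
    {ξ : (Fin q → ℤ) → Ω → (Fin p → ℝ)}
    (hmeas : ∀ i, Measurable (ξ i)) (hstat : StrictStationary ξ P)
    (hmom : ∀ k, Integrable (fun ω => (ξ 0 ω k) ^ 4) P) (j : Fin q → ℤ) (ν μ : Fin p)
    (i : Fin q → ℤ) : ∫ ω, lagProd ξ P j ν μ i ω ∂P = 0 := by
  have hF : Measurable fun x : (Fin q → ℤ) → (Fin p → ℝ) =>
    x 0 ν * x j μ - acov ξ P j ν μ := by fun_prop
  have h := hstat.integral_shift hmeas hF i
  have hi : Integrable (fun ω => ξ 0 ω ν * ξ j ω μ) P := by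
    have := ((memLp_lagProd hmeas hstat hmom j ν μ 0).integrable (by norm_num)).add
      (integrable_const (acov ξ P j ν μ))
    refine this.congr (ae_of_all _ fun ω => ?_)
    simp [lagProd]
  rw [integral_sub hi (integrable_const _)] at h
  simpa [lagProd, acov, add_comm j i] using h

/-- Covariances of the lagged products decay like the square root of the mixing coefficients. The
product at site `i` involves the sites `i` and `i + j`, which costs at most `2 |j|` in the
separation. -/
lemma abs_cov_lagProd_le [MeasurableSpace Ω] {q p : ℕ} {P : Measure Ω} [IsProbabilityMeasure P]
    {ξ : (Fin q → ℤ) → Ω → (Fin p → ℝ)}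
    (hmeas : ∀ i, Measurable (ξ i)) (hstat : StrictStationary ξ P)
    (hmom : ∀ k, Integrable (fun ω => (ξ 0 ω k) ^ 4) P) (j : Fin q → ℤ) (ν μ : Fin p)
    (l : Fin q) (k : Fin q → ℤ) :
    |∫ ω, lagProd ξ P j ν μ 0 ω * lagProd ξ P j ν μ k ω ∂P| ≤
      2 * (∫ ω, lagProd ξ P j ν μ 0 ω ^ 2 ∂P) *
        √(phiMix ξ P (((k l).natAbs : ℤ) - (2 * supAbs j : ℕ))) := by
  set Z := lagProd ξ P j ν μ with hZ
  -- By stationarity the covariance is even in `k`.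
  wlog hk : 0 ≤ k l generalizing k
  · have h := this (-k) (by simp only [Pi.neg_apply]; omega)
    have e := integral_lagProd_mul_shift hmeas hstat j ν μ 0 (-k) k
    rw [zero_add, neg_add_cancel] at e
    rw [Pi.neg_apply, Int.natAbs_neg, hZ, ← e] at h
    simpa only [mul_comm] using h
  rw [Int.natAbs_of_nonneg hk]
  have hj := natAbs_le_supAbs j l
  -- Shifting both products back by `|j|` puts the first one into the left half-space.
  set s : Fin q → ℤ := fun _ => -(supAbs j : ℤ) with hs
  have hV : ∀ i, ∫ ω, Z i ω ^ 2 ∂P = ∫ ω, Z 0 ω ^ 2 ∂P := fun i => by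
    have := integral_lagProd_mul_shift hmeas hstat j ν μ 0 0 i
    simpa only [zero_add, ← sq] using this
  have h := sq_cov_le P (sigmaLE_le hmeas l 0)
    (sigmaGE_le hmeas l (k l - (2 * supAbs j : ℕ))) (X := Z s) (Y := Z (k + s))
    (phiMix_nonneg ξ P _)
    (fun A B hA hB => defect_le_phiMix ξ P l _ hA hB)
    (measurable_lagProd P j ν μ (measurable_sigmaLE (by simp only [hs]; omega))
      (measurable_sigmaLE (by simp only [hs, Pi.add_apply]; omega)))
    (measurable_lagProd P j ν μ
      (measurable_sigmaGE (by simp only [hs, Pi.add_apply]; omega))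
      (measurable_sigmaGE (by simp only [hs, Pi.add_apply]; omega)))
    (memLp_lagProd hmeas hstat hmom j ν μ _) (memLp_lagProd hmeas hstat hmom j ν μ _)
  have e := integral_lagProd_mul_shift hmeas hstat j ν μ 0 k s
  rw [zero_add] at e
  rw [hV s, hV (k + s), hZ, e, integral_lagProd hmeas hstat hmom, zero_mul, sub_zero, ← hZ] at h
  have hV0 : 0 ≤ ∫ ω, Z 0 ω ^ 2 ∂P := integral_nonneg fun _ => sq_nonneg _
  refine abs_le_of_sq_le_sq (h.trans_eq ?_) (by positivity)
  rw [mul_pow, Real.sq_sqrt (phiMix_nonneg ξ P _)]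
  ring

/-- The key second-moment bound: since the covariances of the lagged products are absolutely
summable over `ℤ^q`, weighted sums of them have variance at most a constant times the sum of the
squared weights. -/
lemma exists_second_moment_bound [MeasurableSpace Ω] {q p : ℕ} [Nonempty (Fin q)] {P : Measure Ω}
    [IsProbabilityMeasure P] {ξ : (Fin q → ℤ) → Ω → (Fin p → ℝ)}
    (hmeas : ∀ i, Measurable (ξ i)) (hstat : StrictStationary ξ P)
    (hmom : ∀ k, Integrable (fun ω => (ξ 0 ω k) ^ 4) P)
    (hphisum : Summable (fun r : ℕ => (r : ℝ) ^ (q - 1) * Real.sqrt (phiMix ξ P (r : ℤ))))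
    (j : Fin q → ℤ) (ν μ : Fin p) :
    ∃ K : ℝ, ∀ (S : Finset (Fin q → ℤ)) (c : (Fin q → ℤ) → ℝ),
      ∫ ω, (∑ i ∈ S, c i * lagProd ξ P j ν μ i ω) ^ 2 ∂P ≤ K * ∑ i ∈ S, c i ^ 2 := by
  classical
  set Z := lagProd ξ P j ν μ with hZ
  set R : (Fin q → ℤ) → ℝ := fun k => ∫ ω, Z 0 ω * Z k ω ∂P with hR
  set V := ∫ ω, Z 0 ω ^ 2 ∂P with hV
  have hV0 : 0 ≤ V := integral_nonneg fun _ => sq_nonneg _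
  set g : ℕ → ℝ := fun r => 2 * V * √(phiMix ξ P ((r : ℤ) - (2 * supAbs j : ℕ))) with hg
  have hg0 : ∀ r, 0 ≤ g r := fun r => by positivity
  have hRg : ∀ k, |R k| ≤ g (supAbs k) := fun k => by
    obtain ⟨l, hl⟩ := exists_natAbs_eq_supAbs k
    have := abs_cov_lagProd_le hmeas hstat hmom j ν μ l k
    rwa [hl] at this
  have hsum : Summable fun r : ℕ => 2 * (q : ℝ) * (2 * r + 1) ^ (q - 1) * g r := by
    have := (summable_delay (f := fun r => √(phiMix ξ P r)) (q - 1) (2 * supAbs j)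
      (fun r => Real.sqrt_nonneg _) hphisum).mul_left (2 * (q : ℝ) * (2 * V))
    refine this.congr fun r => ?_
    simp only [hg]; ring
  set K := ∑' r : ℕ, 2 * (q : ℝ) * (2 * r + 1) ^ (q - 1) * g r with hK
  have hRK : ∀ T : Finset (Fin q → ℤ), ∑ k ∈ T, |R k| ≤ K := fun T =>
    (sum_le_sum fun k _ => hRg k).trans (sum_supAbs_le hg0 hsum T)
  have hcov : ∀ s t, ∫ ω, Z s ω * Z t ω ∂P = R (t - s) := fun s t => by
    have := integral_lagProd_mul_shift hmeas hstat j ν μ 0 (t - s) s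
    rwa [zero_add, sub_add_cancel] at this
  have hint : ∀ s t, Integrable (fun ω => Z s ω * Z t ω) P := fun s t =>
    (memLp_lagProd hmeas hstat hmom j ν μ s).integrable_mul
      (memLp_lagProd hmeas hstat hmom j ν μ t)
  refine ⟨K, fun S c => ?_⟩
  have hexp : ∫ ω, (∑ i ∈ S, c i * Z i ω) ^ 2 ∂P =
      ∑ s ∈ S, ∑ t ∈ S, c s * c t * R (t - s) := by
    have : ∀ ω, (∑ i ∈ S, c i * Z i ω) ^ 2 =
        ∑ s ∈ S, ∑ t ∈ S, c s * c t * (Z s ω * Z t ω) := fun ω => by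
      rw [sq, sum_mul_sum]
      exact sum_congr rfl fun s _ => sum_congr rfl fun t _ => by ring
    simp_rw [this]
    rw [integral_finsetSum _ fun s _ => integrable_finsetSum _ fun t _ =>
      (hint s t).const_mul _]
    refine sum_congr rfl fun s _ => ?_
    rw [integral_finsetSum _ fun t _ => (hint s t).const_mul _]
    exact sum_congr rfl fun t _ => by rw [integral_const_mul, hcov]
  have h1 : ∑ s ∈ S, ∑ t ∈ S, c s ^ 2 * |R (t - s)| ≤ ∑ s ∈ S, c s ^ 2 * K :=
    sum_le_sum fun s _ => by
      rw [← mul_sum, ← sum_image (f := fun k => |R k|) (g := fun t => t - s)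
        (sub_left_injective.injOn)]
      exact mul_le_mul_of_nonneg_left (hRK _) (sq_nonneg _)
  have h2 : ∑ s ∈ S, ∑ t ∈ S, c t ^ 2 * |R (t - s)| ≤ ∑ t ∈ S, c t ^ 2 * K := by
    rw [sum_comm]
    refine sum_le_sum fun t _ => ?_
    rw [← mul_sum, ← sum_image (f := fun k => |R k|) (g := fun s => t - s)
      (sub_right_injective.injOn)]
    exact mul_le_mul_of_nonneg_left (hRK _) (sq_nonneg _)
  have h3 : ∑ s ∈ S, ∑ t ∈ S, c s * c t * R (t - s) ≤
      ∑ s ∈ S, ∑ t ∈ S, (c s ^ 2 * |R (t - s)| + c t ^ 2 * |R (t - s)|) / 2 := by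
    refine sum_le_sum fun s _ => sum_le_sum fun t _ => ?_
    have e1 : c s * c t * R (t - s) ≤ |c s * c t| * |R (t - s)| := by
      rw [← abs_mul]; exact le_abs_self _
    have e2 : |c s * c t| ≤ (c s ^ 2 + c t ^ 2) / 2 := by
      rw [abs_le]; constructor <;> nlinarith [sq_nonneg (c s + c t), sq_nonneg (c s - c t)]
    nlinarith [mul_le_mul_of_nonneg_right e2 (abs_nonneg (R (t - s)))]
  have h4 : ∑ s ∈ S, ∑ t ∈ S, (c s ^ 2 * |R (t - s)| + c t ^ 2 * |R (t - s)|) / 2 =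
      (∑ s ∈ S, ∑ t ∈ S, c s ^ 2 * |R (t - s)| + ∑ s ∈ S, ∑ t ∈ S, c t ^ 2 * |R (t - s)|) / 2 := by
    simp only [← sum_div, sum_add_distrib]
  rw [hexp, mul_comm K, sum_mul]
  linarith

/-! ### The boundary of the box is negligible -/

lemma card_box {q : ℕ} (n : Fin q → ℕ) : ((box q n).card : ℝ) = ∏ i, (n i : ℝ) := by
  simp [_root_.box, Pi.card_Icc]

lemma tendsto_apply_atTop {q : ℕ} (i : Fin q) :
    Tendsto (fun n : Fin q → ℕ => (n i : ℝ)) atTop atTop :=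
  tendsto_natCast_atTop_atTop.comp
    (tendsto_atTop.2 fun b => (eventually_ge_atTop fun _ => b).mono fun _ h => h i)

/-- `Γ̃_n(j)` contains the box obtained from `Γ_n` by removing a layer of width `|j|`. -/
lemma prod_le_card_boxJ {q : ℕ} (n : Fin q → ℕ) (j : Fin q → ℤ)
    (hn : ∀ i, 2 * supAbs j ≤ n i) :
    ∏ i, ((n i : ℝ) - 2 * supAbs j) ≤ (boxJ q n j).card := by
  have hsub : Finset.Icc (fun _ => 1 + (supAbs j : ℤ)) (fun i => (n i : ℤ) - supAbs j) ⊆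
      boxJ q n j := by
    intro k hk
    rw [Finset.mem_Icc, Pi.le_def, Pi.le_def] at hk
    simp only [boxJ, _root_.box, mem_filter, Finset.mem_Icc, Pi.le_def, Pi.one_apply, Pi.add_apply]
    refine ⟨⟨fun i => ?_, fun i => ?_⟩, fun i => ?_, fun i => ?_⟩ <;>
    · have h1 := hk.1 i
      have h2 := hk.2 i
      have h3 := natAbs_le_supAbs j i
      omega
  have h : ((Finset.Icc (fun _ => 1 + (supAbs j : ℤ))
      (fun i : Fin q => (n i : ℤ) - supAbs j)).card : ℝ) ≤ (boxJ q n j).card := by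
    exact_mod_cast card_le_card hsub
  refine le_trans (le_of_eq ?_) h
  rw [Pi.card_Icc, Nat.cast_prod]
  refine prod_congr rfl fun i _ => ?_
  have e : (((n i : ℤ) - supAbs j + 1 - (1 + supAbs j)).toNat : ℤ) = n i - 2 * supAbs j := by
    have := hn i
    omega
  rw [Int.card_Icc]
  exact_mod_cast congrArg (Int.cast : ℤ → ℝ) e.symm

lemma tendsto_card_ratio {q : ℕ} (j : Fin q → ℤ) :
    Tendsto (fun n : Fin q → ℕ => ((boxJ q n j).card : ℝ) / ∏ i, (n i : ℝ)) atTop (𝓝 1) := by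
  have hlow : Tendsto (fun n : Fin q → ℕ => ∏ i, (1 - 2 * supAbs j / (n i : ℝ))) atTop (𝓝 1) := by
    have : Tendsto (fun n : Fin q → ℕ => ∏ i, (1 - 2 * supAbs j / (n i : ℝ))) atTop
        (𝓝 (∏ _i : Fin q, (1 - 0))) :=
      tendsto_finsetProd _ fun i _ =>
        tendsto_const_nhds.sub (tendsto_const_nhds.div_atTop (tendsto_apply_atTop i))
    simpa using this
  refine tendsto_of_tendsto_of_tendsto_of_le_of_le' hlow tendsto_const_nhds ?_ ?_
  · filter_upwards [eventually_ge_atTop fun _ => 2 * supAbs j + 1] with n hn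
    have hn' : ∀ i, 2 * supAbs j + 1 ≤ n i := hn
    have hpos : ∀ i, (0 : ℝ) < n i := fun i => by
      have := hn' i
      exact_mod_cast (by omega : 0 < n i)
    calc ∏ i, (1 - 2 * supAbs j / (n i : ℝ))
        = (∏ i, ((n i : ℝ) - 2 * supAbs j)) / ∏ i, (n i : ℝ) := by
          rw [← prod_div_distrib]
          exact prod_congr rfl fun i _ => by have := (hpos i).ne'; field_simp
      _ ≤ _ := div_le_div_of_nonneg_right
          (prod_le_card_boxJ n j fun i => by have := hn' i; omega)
          (prod_nonneg fun i _ => (hpos i).le)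
  · refine Eventually.of_forall fun n => ?_
    rw [← card_box]
    exact div_le_one_of_le₀ (by exact_mod_cast card_le_card (filter_subset _ _)) (by positivity)

/-! ### The difference of the two scalings as a weighted sum -/

/-- The weight of site `i` in the difference of the two scalings:
`|Γ̃_n(j)|^{-1/2} - |n|^{-1/2}` on `Γ̃_n(j)` and `-|n|^{-1/2}` on the rest of `Γ_n`. -/
def wt {q : ℕ} (n : Fin q → ℕ) (j i : Fin q → ℤ) : ℝ :=
  (if i + j ∈ box q n then (√((boxJ q n j).card : ℝ))⁻¹ else 0) - (√(∏ i, (n i : ℝ)))⁻¹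

lemma scaling_diff_eq [MeasurableSpace Ω] {q p : ℕ} (P : Measure Ω)
    (ξ : (Fin q → ℤ) → Ω → (Fin p → ℝ)) (j : Fin q → ℤ) (ν μ : Fin p) (n : Fin q → ℕ) (ω : Ω) :
    √((boxJ q n j).card : ℝ) * (acovHat ξ n j ω ν μ - acov ξ P j ν μ) -
      (√(∏ i, (n i : ℝ)))⁻¹ * ∑ i ∈ box q n, (ξ i ω ν * ξ (i + j) ω μ - acov ξ P j ν μ) =
    ∑ i ∈ box q n, wt n j i * lagProd ξ P j ν μ i ω := by
  simp only [wt, sub_mul, ite_mul, zero_mul, sum_sub_distrib, ← mul_sum, ← sum_filter, lagProd]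
  change _ = (√((boxJ q n j).card : ℝ))⁻¹ * (∑ i ∈ boxJ q n j, _ - ∑ _i ∈ boxJ q n j, _) - _
  congr 1
  -- If `Γ̃_n(j)` is empty, both sides vanish.
  rcases Nat.eq_zero_or_pos (boxJ q n j).card with h0 | h0
  · simp [h0]
  have h1 : (0 : ℝ) < (boxJ q n j).card := by exact_mod_cast h0
  have h2 := Real.sqrt_pos.2 h1
  have h3 := Real.sq_sqrt h1.le
  rw [acovHat, sum_const, nsmul_eq_mul]
  generalize √((boxJ q n j).card : ℝ) = x at h2 h3 ⊢
  rw [← h3]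
  field_simp

lemma sum_wt_sq {q : ℕ} (n : Fin q → ℕ) (j : Fin q → ℤ) (h : (boxJ q n j).Nonempty) :
    ∑ i ∈ box q n, wt n j i ^ 2 =
      2 * (1 - √(((boxJ q n j).card : ℝ) / ∏ i, (n i : ℝ))) := by
  have hT : (0 : ℝ) < (boxJ q n j).card := by exact_mod_cast h.card_pos
  have hN : (0 : ℝ) < ∏ i, (n i : ℝ) := by
    rw [← card_box]
    exact_mod_cast (h.mono (filter_subset _ _)).card_pos
  have h1 := Real.sqrt_pos.2 hT
  have h2 := Real.sq_sqrt hT.le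
  have h3 := Real.sqrt_pos.2 hN
  have h4 := Real.sq_sqrt hN.le
  have key : ∀ i, wt n j i ^ 2 =
      (if i + j ∈ box q n then (√((boxJ q n j).card : ℝ))⁻¹ ^ 2 -
        2 * (√((boxJ q n j).card : ℝ))⁻¹ * (√(∏ i, (n i : ℝ)))⁻¹ else 0) +
        (√(∏ i, (n i : ℝ)))⁻¹ ^ 2 := fun i => by
    unfold wt
    split_ifs <;> ring
  simp only [key]
  rw [sum_add_distrib, ← sum_filter, sum_const, sum_const, nsmul_eq_mul, nsmul_eq_mul, card_box,
    Real.sqrt_div hT.le]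
  change ((boxJ q n j).card : ℝ) * _ + _ = _
  generalize √((boxJ q n j).card : ℝ) = x at h1 h2 ⊢
  generalize √(∏ i, (n i : ℝ)) = y at h3 h4 ⊢
  rw [← h2, ← h4]
  field_simp
  ring

/-- Convergence in probability of one matrix entry at one lag, by Chebyshev's inequality. -/
lemma tendsto_entry [MeasurableSpace Ω] {q p : ℕ} [Nonempty (Fin q)] {P : Measure Ω}
    [IsProbabilityMeasure P] {ξ : (Fin q → ℤ) → Ω → (Fin p → ℝ)}
    (hmeas : ∀ i, Measurable (ξ i)) (hstat : StrictStationary ξ P)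
    (hmom : ∀ k, Integrable (fun ω => (ξ 0 ω k) ^ 4) P)
    (hphisum : Summable (fun r : ℕ => (r : ℝ) ^ (q - 1) * Real.sqrt (phiMix ξ P (r : ℤ))))
    (j : Fin q → ℤ) (ν μ : Fin p) {ε : ℝ} (hε : 0 < ε) :
    Tendsto (fun n : Fin q → ℕ =>
      P {ω | ε ≤ |∑ i ∈ box q n, wt n j i * lagProd ξ P j ν μ i ω|}) atTop (𝓝 0) := by
  obtain ⟨K, hK⟩ := exists_second_moment_bound hmeas hstat hmom hphisum j ν μ
  have hratio := tendsto_card_ratio (q := q) j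
  have hlim : Tendsto (fun n : Fin q → ℕ =>
      K * (2 * (1 - √(((boxJ q n j).card : ℝ) / ∏ i, (n i : ℝ)))) / ε ^ 2) atTop (𝓝 0) := by
    have := ((((tendsto_const_nhds (x := (1 : ℝ))).sub hratio.sqrt).const_mul 2).const_mul
      K).div_const (ε ^ 2)
    simpa using this
  have hlim' := ENNReal.tendsto_ofReal hlim
  rw [ENNReal.ofReal_zero] at hlim'
  refine tendsto_of_tendsto_of_tendsto_of_le_of_le' tendsto_const_nhds hlim'
    (Eventually.of_forall fun _ => zero_le) ?_
  filter_upwards [hratio.eventually (lt_mem_nhds (zero_lt_one' ℝ))] with n hn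
  have hne : (boxJ q n j).Nonempty := by
    rw [nonempty_iff_ne_empty]
    intro h
    simp [h] at hn
  set D : Ω → ℝ := fun ω => ∑ i ∈ box q n, wt n j i * lagProd ξ P j ν μ i ω with hD
  have hDL : MemLp D 2 P := memLp_finsetSum _ fun i _ =>
    (memLp_lagProd hmeas hstat hmom j ν μ i).const_mul _
  have hmarkov := mul_meas_ge_le_integral_of_nonneg (μ := P) (f := fun ω => D ω ^ 2)
    (ae_of_all _ fun ω => sq_nonneg _) hDL.integrable_sq (ε ^ 2)
  have hset : {ω | ε ≤ |D ω|} = {ω | ε ^ 2 ≤ D ω ^ 2} := by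
    ext ω
    rw [Set.mem_ofPred_eq, Set.mem_ofPred_eq, ← sq_abs (D ω),
      pow_le_pow_iff_left₀ hε.le (abs_nonneg _) two_ne_zero]
  rw [hset, ← ENNReal.ofReal_toReal (measure_ne_top P _)]
  refine ENNReal.ofReal_le_ofReal ?_
  rw [le_div_iff₀ (by positivity), mul_comm, ← sum_wt_sq n j hne]
  exact hmarkov.trans (hK _ _)

/-- Lemma: the two scalings of the sample autocovariances are equivalent. -/
theorem acovHat_scaling_equiv
    {q p : ℕ} [Nonempty (Fin q)] (hp : 0 < p)
    [MeasurableSpace Ω] (P : Measure Ω) [IsProbabilityMeasure P]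
    (ξ : (Fin q → ℤ) → Ω → (Fin p → ℝ))
    (hmeas : ∀ i, Measurable (ξ i))
    (hstat : StrictStationary ξ P)
    (hmix : Tendsto (fun r : ℕ => phiMix ξ P (r : ℤ)) atTop (𝓝 0))
    (hmean : ∀ k, ∫ ω, ξ 0 ω k ∂P = 0)
    (hmom : ∀ k, Integrable (fun ω => (ξ 0 ω k) ^ 4) P)
    (hphisum : Summable (fun r : ℕ => (r : ℝ) ^ (q - 1) * Real.sqrt (phiMix ξ P (r : ℤ))))
    (m : Fin q → ℕ) :
    ∀ ε : ℝ, 0 < ε →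
      Tendsto (fun n : Fin q → ℕ =>
        P {ω | ε ≤ (lags q m).sup' (lags_nonempty q m) (fun j =>
          ‖(Real.sqrt ((boxJ q n j).card) • (acovHat ξ n j ω - acov ξ P j)) -
            (Real.sqrt (∏ i, (n i : ℝ)))⁻¹ •
              (fun ν μ => ∑ i ∈ box q n, (ξ i ω ν * ξ (i + j) ω μ - acov ξ P j ν μ))‖)})
        atTop (𝓝 0) := by
  intro ε hε
  -- The maximum over lags and entries exceeds `ε` only if one of finitely many terms does.
  have hlim : Tendsto (fun n : Fin q → ℕ => ∑ j ∈ lags q m, ∑ ν : Fin p, ∑ μ : Fin p,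
      P {ω | ε ≤ |∑ i ∈ box q n, wt n j i * lagProd ξ P j ν μ i ω|}) atTop (𝓝 0) := by
    have := tendsto_finsetSum (lags q m) fun j _ =>
      tendsto_finsetSum (univ : Finset (Fin p)) fun ν _ =>
        tendsto_finsetSum (univ : Finset (Fin p)) fun μ _ =>
          tendsto_entry hmeas hstat hmom hphisum j ν μ hε
    simpa using this
  refine tendsto_of_tendsto_of_tendsto_of_le_of_le tendsto_const_nhds hlim
    (fun _ => zero_le) fun n => ?_
  have hsub : {ω | ε ≤ (lags q m).sup' (lags_nonempty q m) (fun j =>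
          ‖(Real.sqrt ((boxJ q n j).card) • (acovHat ξ n j ω - acov ξ P j)) -
            (Real.sqrt (∏ i, (n i : ℝ)))⁻¹ •
              (fun ν μ => ∑ i ∈ box q n, (ξ i ω ν * ξ (i + j) ω μ - acov ξ P j ν μ))‖)} ⊆
      ⋃ j ∈ lags q m, ⋃ ν ∈ (univ : Finset (Fin p)), ⋃ μ ∈ (univ : Finset (Fin p)),
        {ω | ε ≤ |∑ i ∈ box q n, wt n j i * lagProd ξ P j ν μ i ω|} := by
    intro ω hω
    obtain ⟨j, hj, hjε⟩ := (le_sup'_iff _).1 (Set.mem_ofPred_eq ▸ hω)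
    by_contra hcon
    simp only [Set.mem_iUnion, Set.mem_ofPred_eq, not_exists, not_le] at hcon
    refine absurd hjε (not_le.2 ?_)
    refine (pi_norm_lt_iff hε).2 fun ν => (pi_norm_lt_iff hε).2 fun μ => ?_
    have h := hcon j hj ν (mem_univ _) μ (mem_univ _)
    rw [← scaling_diff_eq] at h
    exact h
  refine (measure_mono hsub).trans ((measure_biUnion_finset_le _ _).trans
    (sum_le_sum fun j _ => (measure_biUnion_finset_le _ _).trans
      (sum_le_sum fun ν _ => measure_biUnion_finset_le _ _)))

end
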